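/- Let B = B(0,1) be the open unit ball in ℝ². There exists a Lipschitz function f on B such that Δf (in the sense of distributions) belongs to L¹(B), but the distributional second derivative ∂_x² f does not belong to L¹(B). -/

import Mathlib

open MeasureTheory Real

noncomputable section

/-- First partial derivative (with respect to the first coordinate) on `ℝ²`. -/
def pd1 (f : ℝ × ℝ → ℝ) (p : ℝ × ℝ) : ℝ := fderiv ℝ f p (1, 0)

/-- Second partial derivative (with respect to the second coordinate) on `ℝ²`. -/
def pd2 (f : ℝ × ℝ → ℝ) (p : ℝ × ℝ) : ℝ := fderiv ℝ f p (0, 1)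

/-- Test functions: smooth compactly supported functions on `ℝ²`. -/
def IsTest (φ : ℝ × ℝ → ℝ) : Prop := ContDiff ℝ (⊤ : ℕ∞) φ ∧ HasCompactSupport φ

/-- The open Euclidean unit ball `B(0,1)` in `ℝ²`. -/
def uball : Set (ℝ × ℝ) := {p : ℝ × ℝ | p.1 ^ 2 + p.2 ^ 2 < 1}

lemma pd1_contDiff {f : ℝ × ℝ → ℝ} (hf : ContDiff ℝ (⊤ : ℕ∞) f) :
    ContDiff ℝ (⊤ : ℕ∞) (pd1 f) := by
  have h : ContDiff ℝ (⊤ : ℕ∞) (fderiv ℝ f) := hf.fderiv_right (by norm_cast)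
  exact h.clm_apply contDiff_const

lemma pd2_contDiff {f : ℝ × ℝ → ℝ} (hf : ContDiff ℝ (⊤ : ℕ∞) f) :
    ContDiff ℝ (⊤ : ℕ∞) (pd2 f) := by
  have h : ContDiff ℝ (⊤ : ℕ∞) (fderiv ℝ f) := hf.fderiv_right (by norm_cast)
  exact h.clm_apply contDiff_const

lemma tsupport_pd1 (φ : ℝ × ℝ → ℝ) : tsupport (pd1 φ) ⊆ tsupport φ :=
  (closure_mono (fun x hx => by
    simp only [Function.mem_support, pd1] at hx ⊢
    intro h0
    rw [h0] at hx
    exact hx (by simp))).trans (tsupport_fderiv_subset ℝ)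

lemma tsupport_pd2 (φ : ℝ × ℝ → ℝ) : tsupport (pd2 φ) ⊆ tsupport φ :=
  (closure_mono (fun x hx => by
    simp only [Function.mem_support, pd2] at hx ⊢
    intro h0
    rw [h0] at hx
    exact hx (by simp))).trans (tsupport_fderiv_subset ℝ)

lemma pd1_test {φ : ℝ × ℝ → ℝ} (h : IsTest φ) : IsTest (pd1 φ) :=
  ⟨pd1_contDiff h.1, h.2.of_isClosed_subset (isClosed_tsupport _) (tsupport_pd1 φ)⟩

lemma pd2_test {φ : ℝ × ℝ → ℝ} (h : IsTest φ) : IsTest (pd2 φ) :=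
  ⟨pd2_contDiff h.1, h.2.of_isClosed_subset (isClosed_tsupport _) (tsupport_pd2 φ)⟩

lemma mul_test_integrable {f φ : ℝ × ℝ → ℝ} (hf : Continuous f) (h : IsTest φ) :
    Integrable (fun p => f p * φ p) :=
  (hf.mul h.1.continuous).integrable_of_hasCompactSupport h.2.mul_left

lemma parts1 {f φ : ℝ × ℝ → ℝ} (hf : ContDiff ℝ (⊤ : ℕ∞) f) (h : IsTest φ) :
    ∫ p, f p * pd1 φ p = - ∫ p, pd1 f p * φ p :=
  integral_mul_fderiv_eq_neg_fderiv_mul_of_integrable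
    (mul_test_integrable (pd1_contDiff hf).continuous h)
    (mul_test_integrable hf.continuous (pd1_test h))
    (mul_test_integrable hf.continuous h)
    (fun x _ => (hf.differentiable (by simp)) x) (fun x _ => (h.1.differentiable (by simp)) x)

lemma parts2 {f φ : ℝ × ℝ → ℝ} (hf : ContDiff ℝ (⊤ : ℕ∞) f) (h : IsTest φ) :
    ∫ p, f p * pd2 φ p = - ∫ p, pd2 f p * φ p :=
  integral_mul_fderiv_eq_neg_fderiv_mul_of_integrable
    (mul_test_integrable (pd2_contDiff hf).continuous h)
    (mul_test_integrable hf.continuous (pd2_test h))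
    (mul_test_integrable hf.continuous h)
    (fun x _ => (hf.differentiable (by simp)) x) (fun x _ => (h.1.differentiable (by simp)) x)

lemma setInt_uball {f φ : ℝ × ℝ → ℝ} (hs : tsupport φ ⊆ uball) :
    ∫ p in uball, f p * φ p = ∫ p, f p * φ p :=
  setIntegral_eq_integral_of_forall_compl_eq_zero fun x hx => by
    rw [image_eq_zero_of_notMem_tsupport (fun h => hx (hs h)), mul_zero]

lemma parts11 {f φ : ℝ × ℝ → ℝ} (hf : ContDiff ℝ (⊤ : ℕ∞) f) (h : IsTest φ)
    (hs : tsupport φ ⊆ uball) :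
    ∫ p in uball, f p * pd1 (pd1 φ) p = ∫ p in uball, pd1 (pd1 f) p * φ p := by
  rw [setInt_uball hs, setInt_uball (((tsupport_pd1 _).trans (tsupport_pd1 _)).trans hs),
    parts1 hf (pd1_test h), parts1 (pd1_contDiff hf) h, neg_neg]

lemma parts22 {f φ : ℝ × ℝ → ℝ} (hf : ContDiff ℝ (⊤ : ℕ∞) f) (h : IsTest φ)
    (hs : tsupport φ ⊆ uball) :
    ∫ p in uball, f p * pd2 (pd2 φ) p = ∫ p in uball, pd2 (pd2 f) p * φ p := by
  rw [setInt_uball hs, setInt_uball (((tsupport_pd2 _).trans (tsupport_pd2 _)).trans hs),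
    parts2 hf (pd2_test h), parts2 (pd2_contDiff hf) h, neg_neg]

def Lap (f : ℝ × ℝ → ℝ) (p : ℝ × ℝ) : ℝ := pd1 (pd1 f) p + pd2 (pd2 f) p

lemma Lap_cont {f : ℝ × ℝ → ℝ} (hf : ContDiff ℝ (⊤ : ℕ∞) f) : Continuous (Lap f) :=
  (pd1_contDiff (pd1_contDiff hf)).continuous.add (pd2_contDiff (pd2_contDiff hf)).continuous

lemma Lap_test {φ : ℝ × ℝ → ℝ} (h : IsTest φ) : IsTest (Lap φ) :=
  ⟨(pd1_test (pd1_test h)).1.add (pd2_test (pd2_test h)).1,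
    (pd1_test (pd1_test h)).2.add (pd2_test (pd2_test h)).2⟩

lemma parts_lap {f φ : ℝ × ℝ → ℝ} (hf : ContDiff ℝ (⊤ : ℕ∞) f) (h : IsTest φ)
    (hs : tsupport φ ⊆ uball) :
    ∫ p in uball, f p * Lap φ p = ∫ p in uball, Lap f p * φ p := by
  have h1 := parts11 hf h hs
  have h2 := parts22 hf h hs
  simp only [Lap, mul_add, add_mul]
  rw [integral_add, integral_add, h1, h2]
  · exact (mul_test_integrable (pd1_contDiff (pd1_contDiff hf)).continuous h).integrableOn
  · exact (mul_test_integrable (pd2_contDiff (pd2_contDiff hf)).continuous h).integrableOn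
  · exact (mul_test_integrable hf.continuous (pd1_test (pd1_test h))).integrableOn
  · exact (mul_test_integrable hf.continuous (pd2_test (pd2_test h))).integrableOn

lemma uball_sub : uball ⊆ Set.Icc (-1) 1 ×ˢ Set.Icc (-1) 1 := by
  rintro ⟨x, y⟩ h
  simp only [uball, Set.mem_ofPred_eq] at h
  refine ⟨⟨?_, ?_⟩, ⟨?_, ?_⟩⟩ <;> simp only <;> nlinarith [sq_nonneg x, sq_nonneg y]

lemma uball_open : IsOpen uball :=
  isOpen_lt (by fun_prop) (by fun_prop)

lemma cont_intOn_sq {f : ℝ × ℝ → ℝ} (hf : Continuous f) :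
    IntegrableOn f (Set.Icc (-1) 1 ×ˢ Set.Icc (-1) 1) :=
  hf.continuousOn.integrableOn_compact (isCompact_Icc.prod isCompact_Icc)

lemma cont_intOn {f : ℝ × ℝ → ℝ} (hf : Continuous f) : IntegrableOn f uball :=
  (cont_intOn_sq hf).mono_set uball_sub

lemma integrable_tsum_aux {μ : Measure (ℝ × ℝ)} {F : ℕ → ℝ × ℝ → ℝ}
    (hF : ∀ i, Integrable (F i) μ) (hs : Summable fun i => ∫ a, ‖F i a‖ ∂μ) :
    Integrable (fun a => ∑' i, F i a) μ ∧ ∀ᵐ a ∂μ, Summable fun i => F i a := by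
  have hm : ∀ i, AEStronglyMeasurable (F i) μ := fun i => (hF i).1
  have hne : ∑' i, ∫⁻ a, ‖F i a‖ₑ ∂μ ≠ ⊤ := by
    simp_rw [← fun i => ofReal_integral_norm_eq_lintegral_enorm (hF i)]
    exact hs.tsum_ofReal_ne_top
  have hf'' : ∀ i, AEMeasurable (‖F i ·‖ₑ) μ := fun i => (hm i).enorm
  rw [← lintegral_tsum hf''] at hne
  refine ⟨⟨by fun_prop, ?_⟩, ?_⟩
  · refine lt_of_le_of_lt (lintegral_mono fun a => ?_) hne.lt_top
    exact enorm_tsum_le_tsum_enorm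
  · refine (ae_lt_top' (AEMeasurable.tsum hf'') hne).mono fun x hx => ?_
    have : Summable fun n => (‖F n x‖₊ : ℝ) := by
      rw [← ENNReal.tsum_coe_ne_top_iff_summable_coe]
      exact hx.ne
    exact Summable.of_norm this

abbrev ell1 := lp (fun _ : ℕ => ℝ) 1

lemma ell1_summable (α : ell1) : Summable fun n => |α n| := by
  have := lp.memℓp α
  have h := this.summable (by simp)
  simpa using h

lemma ell1_norm (α : ell1) : ‖α‖ = ∑' n, |α n| := by
  have := lp.norm_eq_tsum_rpow (by simp) α
  simpa using this

def pairing (b : ℕ → ℝ) (C : ℝ) (hb : ∀ n, |b n| ≤ C) : ell1 →L[ℝ] ℝ :=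
  have hsum : ∀ α : ell1, Summable fun n => α n * b n := fun α =>
    Summable.of_norm_bounded ((ell1_summable α).mul_right C) fun n => by
      rw [Real.norm_eq_abs, abs_mul]
      exact mul_le_mul_of_nonneg_left (hb n) (abs_nonneg _)
  LinearMap.mkContinuous
    { toFun := fun α => ∑' n, α n * b n
      map_add' := fun α β => by
        rw [← (hsum α).tsum_add (hsum β)]
        exact tsum_congr fun n => by simp [add_mul]
      map_smul' := fun c α => by
        simp only [lp.coeFn_smul, Pi.smul_apply, smul_eq_mul, RingHom.id_apply, mul_assoc]
        rw [tsum_mul_left] } C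
    (fun α => by
      have hs := ell1_summable α
      simp only [LinearMap.coe_mk, AddHom.coe_mk]
      rw [ell1_norm, mul_comm, ← tsum_mul_right]
      refine tsum_of_norm_bounded (hs.mul_right C).hasSum fun n => ?_
      rw [Real.norm_eq_abs, abs_mul]
      exact mul_le_mul_of_nonneg_left (hb n) (abs_nonneg _))

lemma pairing_apply (b : ℕ → ℝ) (C : ℝ) (hb : ∀ n, |b n| ≤ C) (α : ell1) :
    pairing b C hb α = ∑' n, α n * b n := rfl

theorem abstract_thm (w : ℕ → ℝ × ℝ → ℝ) (C : ℝ)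
    (hw : ∀ n, ContDiff ℝ (⊤ : ℕ∞) (w n)) (hb : ∀ n p, |w n p| ≤ 1)
    (hL : ∀ n, LipschitzWith 1 (w n)) (hD : ∀ n, ∫ p in uball, |Lap (w n) p| ≤ C)
    (hψ : ∀ n : ℕ, ∃ ψ, IsTest ψ ∧ tsupport ψ ⊆ uball ∧ (∀ p, |ψ p| ≤ 1) ∧
      (n : ℝ) ≤ ∫ p in uball, w n p * pd1 (pd1 ψ) p) :
    ∃ f : ℝ × ℝ → ℝ, (∃ K : NNReal, LipschitzOnWith K f uball) ∧
      (∃ g : ℝ × ℝ → ℝ, IntegrableOn g uball ∧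
        ∀ φ : ℝ × ℝ → ℝ, IsTest φ → tsupport φ ⊆ uball →
          ∫ p in uball, g p * φ p =
            ∫ p in uball, f p * (pd1 (pd1 φ) p + pd2 (pd2 φ) p)) ∧
      ¬ (∃ h : ℝ × ℝ → ℝ, IntegrableOn h uball ∧
        ∀ φ : ℝ × ℝ → ℝ, IsTest φ → tsupport φ ⊆ uball →
          ∫ p in uball, h p * φ p = ∫ p in uball, f p * pd1 (pd1 φ) p) := by
  have hsum : ∀ (α : ell1) p, Summable fun n => α n * w n p := fun α p =>
    Summable.of_norm_bounded (ell1_summable α) fun n => by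
      rw [Real.norm_eq_abs, abs_mul]
      exact mul_le_of_le_one_right (abs_nonneg _) (hb n p)
  -- swapping the sum and the pairing with a test function
  have hswap : ∀ (α : ell1) (θ : ℝ × ℝ → ℝ), IsTest θ →
      ∫ p in uball, (∑' n, α n * w n p) * θ p = ∑' n, α n * ∫ p in uball, w n p * θ p := by
    intro α θ hθ
    have hFint : ∀ n, Integrable (fun p => α n * (w n p * θ p)) (volume.restrict uball) := fun n =>
      ((mul_test_integrable (hw n).continuous hθ).integrableOn).const_mul _
    have hθi : Integrable θ (volume.restrict uball) := cont_intOn hθ.1.continuous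
    have := integral_tsum_of_summable_integral_norm hFint ?_
    · simp_rw [← tsum_mul_right]
      simp_rw [integral_const_mul] at this
      rw [this]
      refine integral_congr_ae (ae_of_all _ fun p => ?_)
      exact tsum_congr fun n => by ring
    · refine Summable.of_nonneg_of_le (fun n => integral_nonneg fun p => norm_nonneg _) (fun n => ?_)
        ((ell1_summable α).mul_right (∫ p in uball, ‖θ p‖))
      rw [← integral_const_mul]
      refine integral_mono (hFint n).norm (hθi.norm.const_mul _) fun p => ?_
      simp only [norm_mul, Real.norm_eq_abs]
      refine mul_le_mul_of_nonneg_left ?_ (abs_nonneg _)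
      exact mul_le_of_le_one_left (abs_nonneg _) (hb n p)
  -- good properties for every α
  have hgood : ∀ α : ell1, (∃ K : NNReal, LipschitzOnWith K (fun p => ∑' n, α n * w n p) uball) ∧
      (∃ g : ℝ × ℝ → ℝ, IntegrableOn g uball ∧
        ∀ φ : ℝ × ℝ → ℝ, IsTest φ → tsupport φ ⊆ uball →
          ∫ p in uball, g p * φ p =
            ∫ p in uball, (∑' n, α n * w n p) * (pd1 (pd1 φ) p + pd2 (pd2 φ) p)) := by
    intro α
    refine ⟨⟨Real.toNNReal ‖α‖, ?_⟩, fun p => ∑' n, α n * Lap (w n) p, ?_⟩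
    · refine LipschitzWith.lipschitzOnWith (LipschitzWith.of_dist_le_mul fun p q => ?_)
      rw [Real.coe_toNNReal _ (norm_nonneg _)]
      rw [Real.dist_eq, ← Real.norm_eq_abs, ← (hsum α p).tsum_sub (hsum α q), ell1_norm, ← tsum_mul_right]
      refine tsum_of_norm_bounded ((ell1_summable α).mul_right (dist p q)).hasSum fun n => ?_
      rw [← mul_sub, Real.norm_eq_abs, abs_mul]
      refine mul_le_mul_of_nonneg_left ?_ (abs_nonneg _)
      have h1 := (hL n).dist_le_mul p q
      rwa [NNReal.coe_one, one_mul, Real.dist_eq] at h1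
    · have hFint : ∀ n, Integrable (fun p => α n * Lap (w n) p) (volume.restrict uball) := fun n =>
        (cont_intOn (Lap_cont (hw n))).const_mul _
      have hs : Summable fun n => ∫ p in uball, ‖α n * Lap (w n) p‖ := by
        refine Summable.of_nonneg_of_le (fun n => integral_nonneg fun p => norm_nonneg _)
          (fun n => ?_) ((ell1_summable α).mul_right C)
        simp only [norm_mul, Real.norm_eq_abs]
        rw [integral_const_mul]
        exact mul_le_mul_of_nonneg_left (hD n) (abs_nonneg _)
      obtain ⟨h1, h2⟩ := integrable_tsum_aux hFint hs
      refine ⟨h1, fun φ hφ hsφ => ?_⟩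
      have hR := hswap α (Lap φ) (Lap_test hφ)
      have hLe : ∀ p, pd1 (pd1 φ) p + pd2 (pd2 φ) p = Lap φ p := fun p => rfl
      simp_rw [hLe]
      rw [hR]
      simp_rw [fun n => parts_lap (hw n) hφ hsφ]
      obtain ⟨Cφ, hCφ⟩ := hφ.1.continuous.bounded_above_of_compact_support hφ.2
      have hFint' : ∀ n, Integrable (fun p => α n * (Lap (w n) p * φ p))
          (volume.restrict uball) := fun n =>
        ((mul_test_integrable (Lap_cont (hw n)) hφ).integrableOn).const_mul _
      have := integral_tsum_of_summable_integral_norm hFint' ?_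
      · simp_rw [integral_const_mul] at this
        rw [this]
        refine integral_congr_ae (ae_of_all _ fun p => ?_)
        simp only
        rw [← tsum_mul_right]
        exact tsum_congr fun n => by ring
      · refine Summable.of_nonneg_of_le (fun n => integral_nonneg fun p => norm_nonneg _)
          (fun n => ?_) (hs.mul_right Cφ)
        rw [← integral_mul_const]
        refine integral_mono (hFint' n).norm ((hFint n).norm.mul_const _) fun p => ?_
        simp only [norm_mul, ← mul_assoc]
        exact mul_le_mul_of_nonneg_left (hCφ p) (by positivity)
  by_contra hcon
  push Not at hcon
  let ι := {ψ : ℝ × ℝ → ℝ // IsTest ψ ∧ tsupport ψ ⊆ uball ∧ ∀ p, |ψ p| ≤ 1}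
  have hbd : ∀ (i : ι) n, |∫ p in uball, w n p * pd1 (pd1 i.1) p|
      ≤ ∫ p in uball, |pd1 (pd1 i.1) p| := by
    intro i n
    have ht := pd1_test (pd1_test i.2.1)
    refine (abs_integral_le_integral_abs).trans ?_
    refine integral_mono (mul_test_integrable (hw n).continuous ht).integrableOn.abs
      (cont_intOn ht.1.continuous).abs fun p => ?_
    simp only [abs_mul]
    exact mul_le_of_le_one_left (abs_nonneg _) (hb n p)
  let T : ι → ell1 →L[ℝ] ℝ := fun i => pairing _ _ (hbd i)
  obtain ⟨M, hM⟩ := banach_steinhaus (g := T) (fun α => by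
    obtain ⟨h, hh, hφ⟩ := hcon _ (hgood α).1 (hgood α).2
    refine ⟨∫ p in uball, |h p|, fun i => ?_⟩
    have e : T i α = ∫ p in uball, h p * i.1 p := by
      rw [hφ i.1 i.2.1 i.2.2.1, hswap α _ (pd1_test (pd1_test i.2.1))]
      rfl
    rw [e]
    refine (norm_integral_le_integral_norm _).trans ?_
    refine integral_mono_of_nonneg (ae_of_all _ fun p => norm_nonneg _) hh.abs
      (ae_of_all _ fun p => ?_)
    simp only [norm_mul, Real.norm_eq_abs]
    exact mul_le_of_le_one_right (abs_nonneg _) (i.2.2.2 p))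
  obtain ⟨n, hn⟩ := exists_nat_gt M
  obtain ⟨ψ, h1, h2, h3, h4⟩ := hψ n
  have h5 := (T ⟨ψ, h1, h2, h3⟩).le_opNorm (lp.single 1 n 1)
  have h6 : T ⟨ψ, h1, h2, h3⟩ (lp.single 1 n 1) = ∫ p in uball, w n p * pd1 (pd1 ψ) p := by
    change ∑' m, _ = _
    rw [tsum_eq_single n]
    · simp
    · intro m hm
      simp [hm]
  rw [h6, lp.norm_single (by simp), norm_one, mul_one] at h5
  have h7 := hM ⟨ψ, h1, h2, h3⟩
  have h8 := Real.le_norm_self (∫ p in uball, w n p * pd1 (pd1 ψ) p)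
  linarith

lemma pd1_eq {f : ℝ × ℝ → ℝ} {p : ℝ × ℝ} {d : ℝ} (hf : DifferentiableAt ℝ f p)
    (h : HasDerivAt (fun x => f (x, p.2)) d p.1) : pd1 f p = d := by
  have h1 : HasDerivAt (fun x : ℝ => ((x, p.2) : ℝ × ℝ)) (1, 0) p.1 :=
    (hasDerivAt_id p.1).prodMk (hasDerivAt_const p.1 p.2)
  have h2 : HasFDerivAt f (fderiv ℝ f p) ((p.1, p.2) : ℝ × ℝ) := hf.hasFDerivAt
  exact (h2.comp_hasDerivAt p.1 h1).unique h

lemma pd2_eq {f : ℝ × ℝ → ℝ} {p : ℝ × ℝ} {d : ℝ} (hf : DifferentiableAt ℝ f p)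
    (h : HasDerivAt (fun y => f (p.1, y)) d p.2) : pd2 f p = d := by
  have h1 : HasDerivAt (fun y : ℝ => ((p.1, y) : ℝ × ℝ)) (0, 1) p.2 :=
    (hasDerivAt_const p.2 p.1).prodMk (hasDerivAt_id p.2)
  have h2 : HasFDerivAt f (fderiv ℝ f p) ((p.1, p.2) : ℝ × ℝ) := hf.hasFDerivAt
  exact (h2.comp_hasDerivAt p.2 h1).unique h

/-- The basic denominator. -/
def DD (η N : ℝ) (p : ℝ × ℝ) : ℝ := η ^ 2 + (1 - cos (N * p.1)) + (1 - cos (N * p.2))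

def WW (η N : ℝ) (p : ℝ × ℝ) : ℝ := log (DD η N p) / N ^ 2

lemma DD_ge (η N : ℝ) (p : ℝ × ℝ) : η ^ 2 ≤ DD η N p := by
  unfold DD; linarith [cos_le_one (N * p.1), cos_le_one (N * p.2)]

lemma DD_pos {η : ℝ} (hη : 0 < η) (N : ℝ) (p : ℝ × ℝ) : 0 < DD η N p :=
  lt_of_lt_of_le (by positivity) (DD_ge η N p)

lemma DD_contDiff (η N : ℝ) : ContDiff ℝ (⊤ : ℕ∞) (DD η N) := by
  unfold DD; fun_prop

lemma WW_contDiff {η : ℝ} (hη : 0 < η) (N : ℝ) : ContDiff ℝ (⊤ : ℕ∞) (WW η N) := by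
  unfold WW
  exact ((DD_contDiff η N).log fun p => (DD_pos hη N p).ne').div_const _

lemma pd1_WW {η N : ℝ} (hη : 0 < η) (hN : 0 < N) :
    pd1 (WW η N) = fun p => sin (N * p.1) / DD η N p / N := by
  funext p
  refine pd1_eq ((WW_contDiff hη N).differentiable (by simp) p) ?_
  have hD := (DD_pos hη N p).ne'
  have h0 : HasDerivAt (fun x : ℝ => N * x) N p.1 := by
    simpa using (hasDerivAt_id p.1).const_mul N
  have h1 : HasDerivAt (fun x => DD η N (x, p.2)) (sin (N * p.1) * N) p.1 := by
    have := (((h0.cos).const_sub 1).const_add (η ^ 2)).add_const (1 - cos (N * p.2))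
    exact this.congr_deriv (by ring)
  refine HasDerivAt.congr_deriv ((h1.log hD).div_const (N ^ 2)) ?_
  have : DD η N (p.1, p.2) = DD η N p := rfl
  rw [this]
  field_simp

lemma pd2_WW {η N : ℝ} (hη : 0 < η) (hN : 0 < N) :
    pd2 (WW η N) = fun p => sin (N * p.2) / DD η N p / N := by
  funext p
  refine pd2_eq ((WW_contDiff hη N).differentiable (by simp) p) ?_
  have hD := (DD_pos hη N p).ne'
  have h0 : HasDerivAt (fun x : ℝ => N * x) N p.2 := by
    simpa using (hasDerivAt_id p.2).const_mul N
  have h1 : HasDerivAt (fun y => DD η N (p.1, y)) (sin (N * p.2) * N) p.2 := by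
    have := ((h0.cos).const_sub 1).const_add (η ^ 2 + (1 - cos (N * p.1)))
    exact this.congr_deriv (by ring)
  refine HasDerivAt.congr_deriv ((h1.log hD).div_const (N ^ 2)) ?_
  have : DD η N (p.1, p.2) = DD η N p := rfl
  rw [this]
  field_simp

lemma pd11_WW {η N : ℝ} (hη : 0 < η) (hN : 0 < N) (p : ℝ × ℝ) :
    pd1 (pd1 (WW η N)) p = cos (N * p.1) / DD η N p - sin (N * p.1) ^ 2 / DD η N p ^ 2 := by
  refine pd1_eq ((pd1_contDiff (WW_contDiff hη N)).differentiable (by simp) p) ?_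
  rw [pd1_WW hη hN]
  have hD := (DD_pos hη N p).ne'
  have h0 : HasDerivAt (fun x : ℝ => N * x) N p.1 := by
    simpa using (hasDerivAt_id p.1).const_mul N
  have h1 : HasDerivAt (fun x => DD η N (x, p.2)) (sin (N * p.1) * N) p.1 := by
    have := (((h0.cos).const_sub 1).const_add (η ^ 2)).add_const (1 - cos (N * p.2))
    exact this.congr_deriv (by ring)
  refine HasDerivAt.congr_deriv ((h0.sin.div h1 hD).div_const N) ?_
  have : DD η N (p.1, p.2) = DD η N p := rfl
  rw [this]
  field_simp

lemma pd22_WW {η N : ℝ} (hη : 0 < η) (hN : 0 < N) (p : ℝ × ℝ) :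
    pd2 (pd2 (WW η N)) p = cos (N * p.2) / DD η N p - sin (N * p.2) ^ 2 / DD η N p ^ 2 := by
  refine pd2_eq ((pd2_contDiff (WW_contDiff hη N)).differentiable (by simp) p) ?_
  rw [pd2_WW hη hN]
  have hD := (DD_pos hη N p).ne'
  have h0 : HasDerivAt (fun x : ℝ => N * x) N p.2 := by
    simpa using (hasDerivAt_id p.2).const_mul N
  have h1 : HasDerivAt (fun y => DD η N (p.1, y)) (sin (N * p.2) * N) p.2 := by
    have := ((h0.cos).const_sub 1).const_add (η ^ 2 + (1 - cos (N * p.1)))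
    exact this.congr_deriv (by ring)
  refine HasDerivAt.congr_deriv ((h0.sin.div h1 hD).div_const N) ?_
  have : DD η N (p.1, p.2) = DD η N p := rfl
  rw [this]
  field_simp

lemma WW_bound {η N : ℝ} (hη : 0 < η) (hη1 : η ≤ 1) (hN : 6 + 2 / η ^ 2 ≤ N) (p : ℝ × ℝ) :
    |WW η N p| ≤ 1 := by
  have hi : 0 < 1 / η ^ 2 := by positivity
  have h2 : 2 / η ^ 2 = 2 * (1 / η ^ 2) := by ring
  have hN0 : 0 < N := by linarith
  unfold WW
  rw [abs_div, abs_of_pos (by positivity : 0 < N ^ 2), div_le_one (by positivity)]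
  have hDp := DD_pos hη N p
  have h5 : DD η N p ≤ 5 := by
    unfold DD
    nlinarith [neg_one_le_cos (N * p.1), neg_one_le_cos (N * p.2)]
  have hinv : (DD η N p)⁻¹ ≤ 1 / η ^ 2 := by
    rw [one_div]; exact inv_anti₀ (by positivity) (DD_ge η N p)
  have hl1 := Real.log_le_sub_one_of_pos hDp
  have hl2 := Real.one_sub_inv_le_log_of_pos hDp
  rw [abs_le]
  constructor <;> nlinarith

lemma WW_lip {η N : ℝ} (hη : 0 < η) (hN : 6 + 2 / η ^ 2 ≤ N) : LipschitzWith 1 (WW η N) := by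
  have hi : 0 < 1 / η ^ 2 := by positivity
  have h2 : 2 / η ^ 2 = 2 * (1 / η ^ 2) := by ring
  have hN0 : 0 < N := by linarith
  have key : ∀ p z, |sin z / DD η N p / N| ≤ 1 / 2 := by
    intro p z
    have hDp := DD_pos hη N p
    rw [div_div, abs_div, abs_of_pos (by positivity : 0 < DD η N p * N)]
    rw [div_le_div_iff₀ (by positivity) (by norm_num)]
    have : 2 ≤ DD η N p * N := by
      calc 2 = η ^ 2 * (2 / η ^ 2) := by field_simp
        _ ≤ η ^ 2 * N := by gcongr; linarith
        _ ≤ _ := by gcongr; exact DD_ge η N p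
    linarith [abs_sin_le_one z]
  refine lipschitzWith_of_nnnorm_fderiv_le ((WW_contDiff hη N).differentiable (by simp)) fun p => ?_
  rw [← NNReal.coe_le_coe, coe_nnnorm, NNReal.coe_one]
  refine ContinuousLinearMap.opNorm_le_bound _ zero_le_one fun v => ?_
  have hv : v = v.1 • ((1, 0) : ℝ × ℝ) + v.2 • ((0, 1) : ℝ × ℝ) := by
    ext <;> simp
  have e1 : fderiv ℝ (WW η N) p (1, 0) = sin (N * p.1) / DD η N p / N := by
    have := congrFun (pd1_WW hη hN0) p
    exact this
  have e2 : fderiv ℝ (WW η N) p (0, 1) = sin (N * p.2) / DD η N p / N := by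
    have := congrFun (pd2_WW hη hN0) p
    exact this
  have k1 := key p (N * p.1)
  have k2 := key p (N * p.2)
  rw [← e1] at k1
  rw [← e2] at k2
  have n1 : |v.1| ≤ ‖v‖ := norm_fst_le v
  have n2 : |v.2| ≤ ‖v‖ := norm_snd_le v
  calc ‖fderiv ℝ (WW η N) p v‖
      = |v.1 * fderiv ℝ (WW η N) p (1, 0) + v.2 * fderiv ℝ (WW η N) p (0, 1)| := by
        conv_lhs => rw [hv]
        rw [map_add, map_smul, map_smul]; rfl
    _ ≤ |v.1| * |fderiv ℝ (WW η N) p (1, 0)| + |v.2| * |fderiv ℝ (WW η N) p (0, 1)| := by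
        rw [← abs_mul, ← abs_mul]; exact abs_add_le _ _
    _ ≤ ‖v‖ * (1 / 2) + ‖v‖ * (1 / 2) := by gcongr
    _ = 1 * ‖v‖ := by ring

def PP (η x : ℝ) : ℝ := η / (η ^ 2 + (1 - cos x))

lemma PP_nonneg {η : ℝ} (hη : 0 < η) (x : ℝ) : 0 ≤ PP η x := by
  have := cos_le_one x
  exact div_nonneg hη.le (by nlinarith [sq_nonneg η])

lemma PP_cont {η : ℝ} (hη : 0 < η) : Continuous (PP η) := by
  unfold PP
  refine continuous_const.div (by fun_prop) fun x => ?_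
  have := cos_le_one x
  have : 0 < η ^ 2 := by positivity
  linarith

lemma eps_bound {η : ℝ} (hη : 0 < η) (N : ℝ) (p : ℝ × ℝ) :
    η ^ 2 / DD η N p ^ 2 ≤ PP η (N * p.1) * PP η (N * p.2) := by
  have h0 : 0 < η ^ 2 := by positivity
  have hs : 0 ≤ 1 - cos (N * p.1) := by linarith [cos_le_one (N * p.1)]
  have ht : 0 ≤ 1 - cos (N * p.2) := by linarith [cos_le_one (N * p.2)]
  unfold PP DD
  rw [div_mul_div_comm, ← pow_two]
  refine div_le_div_of_nonneg_left h0.le (by positivity) ?_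
  rw [pow_two (_ + _ + _)]
  exact mul_le_mul (by linarith) (by linarith) (by linarith) (by linarith)

lemma Lap_WW_bound {η N : ℝ} (hη : 0 < η) (hN : 0 < N) (p : ℝ × ℝ) :
    |Lap (WW η N) p| ≤ 2 * (PP η (N * p.1) * PP η (N * p.2)) + 2 := by
  refine le_trans ?_ (add_le_add_left (mul_le_mul_of_nonneg_left (eps_bound hη N p) zero_le_two) _)
  have hD := DD_pos hη N p
  have h0 : 0 < η ^ 2 := by positivity
  have hs : 0 ≤ 1 - cos (N * p.1) := by linarith [cos_le_one (N * p.1)]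
  have ht : 0 ≤ 1 - cos (N * p.2) := by linarith [cos_le_one (N * p.2)]
  unfold Lap
  rw [pd11_WW hη hN, pd22_WW hη hN, sin_sq, sin_sq]
  have hDe : DD η N p = η ^ 2 + (1 - cos (N * p.1)) + (1 - cos (N * p.2)) := rfl
  generalize DD η N p = D at *
  set s := 1 - cos (N * p.1) with hsd
  set t := 1 - cos (N * p.2) with htd
  have e1 : cos (N * p.1) = 1 - s := by rw [hsd]; ring
  have e2 : cos (N * p.2) = 1 - t := by rw [htd]; ring
  rw [e1, e2]
  generalize η ^ 2 = ε at *
  have : (1 - s) / D - (1 - (1 - s) ^ 2) / D ^ 2 + ((1 - t) / D - (1 - (1 - t) ^ 2) / D ^ 2)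
      = (2 * ε + ε * D + (s ^ 2 + t ^ 2) - D ^ 2) / D ^ 2 := by
    field_simp
    rw [hDe]; ring
  rw [this, abs_div, abs_of_pos (by positivity : 0 < D ^ 2), div_le_iff₀ (by positivity)]
  have e3 : (2 * (ε / D ^ 2) + 2) * D ^ 2 = 2 * ε + 2 * D ^ 2 := by field_simp
  rw [e3, abs_le]
  have a1 : ε * D ≤ D ^ 2 := by rw [pow_two]; gcongr; linarith
  have a2 : 0 ≤ ε * D := by positivity
  have a3 : s ^ 2 + t ^ 2 ≤ D ^ 2 := by
    rw [hDe]; nlinarith [mul_nonneg hs ht, mul_nonneg h0.le hs, mul_nonneg h0.le ht]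
  constructor <;> nlinarith [sq_nonneg s, sq_nonneg t]

/-- The test-function core `(t - s) / D`. -/
def QQ (η N : ℝ) (p : ℝ × ℝ) : ℝ := (cos (N * p.1) - cos (N * p.2)) / DD η N p

def FF (η : ℝ) (x y : ℝ) : ℝ :=
  (cos x - cos y) ^ 2 / (η ^ 2 + (1 - cos x) + (1 - cos y)) ^ 3

lemma QQ_contDiff {η : ℝ} (hη : 0 < η) (N : ℝ) : ContDiff ℝ (⊤ : ℕ∞) (QQ η N) := by
  unfold QQ
  exact ContDiff.div (by fun_prop) (DD_contDiff η N) fun p => (DD_pos hη N p).ne'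

lemma QQ_bound {η : ℝ} (hη : 0 < η) (N : ℝ) (p : ℝ × ℝ) : |QQ η N p| ≤ 1 := by
  have hD := DD_pos hη N p
  have h0 : 0 < η ^ 2 := by positivity
  unfold QQ
  rw [abs_div, abs_of_pos hD, div_le_one hD, abs_le]
  unfold DD
  constructor <;> linarith [cos_le_one (N * p.1), cos_le_one (N * p.2)]

lemma FF_cont {η : ℝ} (hη : 0 < η) : Continuous (fun p : ℝ × ℝ => FF η p.1 p.2) := by
  unfold FF
  refine Continuous.div (by fun_prop) (by fun_prop) fun p => ?_
  have := DD_pos hη 1 p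
  simp only [DD, one_mul] at this
  positivity

lemma FF_nonneg {η : ℝ} (hη : 0 < η) (x y : ℝ) : 0 ≤ FF η x y := by
  have := DD_pos hη 1 (x, y)
  simp only [DD, one_mul] at this
  unfold FF
  positivity

lemma prod_lower {η N : ℝ} (hη : 0 < η) (hN : 0 < N) (p : ℝ × ℝ) :
    FF η (N * p.1) (N * p.2) - (PP η (N * p.1) * PP η (N * p.2) + 1)
      ≤ pd1 (pd1 (WW η N)) p * QQ η N p := by
  refine le_trans (sub_le_sub_left (add_le_add_left (eps_bound hη N p) _) _) ?_
  have hQ := QQ_bound hη N p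
  have hD := DD_pos hη N p
  have h0 : 0 < η ^ 2 := by positivity
  have hs : 0 ≤ 1 - cos (N * p.1) := by linarith [cos_le_one (N * p.1)]
  have hs2 : 1 - cos (N * p.1) ≤ 2 := by linarith [neg_one_le_cos (N * p.1)]
  have ht : 0 ≤ 1 - cos (N * p.2) := by linarith [cos_le_one (N * p.2)]
  rw [pd11_WW hη hN, sin_sq]
  have hF : FF η (N * p.1) (N * p.2) = (cos (N * p.1) - cos (N * p.2)) ^ 2 / DD η N p ^ 3 := rfl
  rw [hF]
  have hDe : DD η N p = η ^ 2 + (1 - cos (N * p.1)) + (1 - cos (N * p.2)) := rfl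
  have hQe : QQ η N p = (cos (N * p.1) - cos (N * p.2)) / DD η N p := rfl
  generalize QQ η N p = q at *
  generalize DD η N p = D at *
  set s := 1 - cos (N * p.1) with hsd
  set t := 1 - cos (N * p.2) with htd
  have e1 : cos (N * p.1) = 1 - s := by rw [hsd]; ring
  have e2 : cos (N * p.2) = 1 - t := by rw [htd]; ring
  rw [e1, e2] at *
  generalize η ^ 2 = ε at *
  have : ((1 - s) / D - (1 - (1 - s) ^ 2) / D ^ 2) * q
      = (1 - s - (1 - t)) ^ 2 / D ^ 3 + ((ε * (1 - s) - s * t) / D ^ 2) * q := by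
    rw [hQe]
    field_simp
    rw [hDe]; ring
  rw [this]
  have hb : |((ε * (1 - s) - s * t) / D ^ 2) * q| ≤ ε / D ^ 2 + 1 := by
    rw [abs_mul]
    refine (mul_le_of_le_one_right (abs_nonneg _) hQ).trans ?_
    rw [abs_div, abs_of_pos (by positivity : 0 < D ^ 2), div_le_iff₀ (by positivity)]
    have e3 : (ε / D ^ 2 + 1) * D ^ 2 = ε + D ^ 2 := by field_simp
    rw [e3, abs_le]
    have a3 : s * t ≤ D ^ 2 := by
      rw [hDe]; nlinarith [mul_nonneg hs ht, mul_nonneg h0.le hs, mul_nonneg h0.le ht]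
    constructor <;> nlinarith [mul_nonneg hs ht, mul_nonneg h0.le hs]
  linarith [(abs_le.mp hb).1]

lemma periodic_scale {G : ℝ → ℝ} (hG : Continuous G) (hp : Function.Periodic G (2 * π))
    (k m : ℕ) (hk : 0 < k) :
    ∫ x in (-((m : ℝ) / 2))..((m : ℝ) / 2), G (2 * π * k * x)
      = m / (2 * π) * ∫ x in (-π)..π, G x := by
  have hk' : (0 : ℝ) < k := by exact_mod_cast hk
  have hπ := pi_pos
  rw [intervalIntegral.integral_comp_mul_left _ (by positivity : 2 * π * (k : ℝ) ≠ 0)]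
  have e : 2 * π * (k : ℝ) * ((m : ℝ) / 2)
      = 2 * π * (k : ℝ) * (-((m : ℝ) / 2)) + ((k * m : ℕ) : ℤ) • (2 * π) := by
    rw [zsmul_eq_mul]; push_cast; ring
  rw [e, hp.intervalIntegral_add_zsmul_eq _ _ (fun a b => hG.intervalIntegrable a b),
    hp.intervalIntegral_add_eq _ (-π)]
  have e2 : -π + 2 * π = π := by ring
  rw [e2, zsmul_eq_mul, smul_eq_mul]
  push_cast
  field_simp

lemma one_sub_cos_ge {x : ℝ} (hx : |x| ≤ π) : x ^ 2 / 5 ≤ 1 - cos x := by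
  have h := cos_le_one_sub_mul_cos_sq hx
  have h2 : 1 / 5 ≤ 2 / π ^ 2 := by
    rw [div_le_div_iff₀ (by norm_num) (by positivity)]
    nlinarith [pi_lt_d2, pi_pos]
  nlinarith [mul_le_mul_of_nonneg_right h2 (sq_nonneg x)]

lemma PP_int {η : ℝ} (hη : 0 < η) : ∫ x in (-π)..π, PP η x ≤ 3 * π := by
  have hπ := pi_pos
  have hc : Continuous fun x : ℝ => η / (η ^ 2 + x ^ 2 / 9) := by
    refine continuous_const.div (by fun_prop) fun x => ?_
    positivity
  have hd : ∀ x : ℝ, HasDerivAt (fun x : ℝ => 3 * arctan (x / (3 * η)))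
      (η / (η ^ 2 + x ^ 2 / 9)) x := by
    intro x
    have h0 : HasDerivAt (fun x : ℝ => x / (3 * η)) (1 / (3 * η)) x :=
      (hasDerivAt_id x).div_const _
    refine HasDerivAt.congr_deriv ((h0.arctan).const_mul 3) ?_
    field_simp
    ring
  calc ∫ x in (-π)..π, PP η x ≤ ∫ x in (-π)..π, η / (η ^ 2 + x ^ 2 / 9) := by
        refine intervalIntegral.integral_mono_on (by linarith) ((PP_cont hη).intervalIntegrable _ _)
          (hc.intervalIntegrable _ _) fun x hx => ?_
        have := one_sub_cos_ge (abs_le.mpr ⟨hx.1, hx.2⟩)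
        unfold PP
        gcongr
        nlinarith [sq_nonneg x]
    _ = 3 * arctan (π / (3 * η)) - 3 * arctan (-π / (3 * η)) :=
        intervalIntegral.integral_eq_sub_of_hasDerivAt (fun x _ => hd x)
          (hc.intervalIntegrable _ _)
    _ ≤ 3 * π := by
        have := arctan_lt_pi_div_two (π / (3 * η))
        have := neg_pi_div_two_lt_arctan (-π / (3 * η))
        linarith

lemma Icc_interval (f : ℝ → ℝ) {a b : ℝ} (h : a ≤ b) :
    ∫ x in Set.Icc a b, f x = ∫ x in a..b, f x := by
  rw [integral_Icc_eq_integral_Ioc, intervalIntegral.integral_of_le h]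

lemma PP_scaled {η : ℝ} (hη : 0 < η) (k : ℕ) (hk : 0 < k) :
    0 ≤ ∫ x in Set.Icc (-1 : ℝ) 1, PP η (2 * π * k * x) ∧
    ∫ x in Set.Icc (-1 : ℝ) 1, PP η (2 * π * k * x) ≤ 3 := by
  refine ⟨integral_nonneg fun x => PP_nonneg hη _, ?_⟩
  have hper : Function.Periodic (PP η) (2 * π) := fun x => by simp [PP]
  have h := periodic_scale (PP_cont hη) hper k 2 hk
  have e : ((2 : ℕ) : ℝ) / 2 = 1 := by norm_num
  rw [e] at h
  rw [Icc_interval _ (by norm_num), h]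
  have hπ := pi_pos
  have h3 := PP_int hη
  calc ((2 : ℕ) : ℝ) / (2 * π) * ∫ x in (-π)..π, PP η x
      ≤ ((2 : ℕ) : ℝ) / (2 * π) * (3 * π) := by gcongr
    _ = 3 := by push_cast; field_simp

lemma PPsq_int {η : ℝ} (hη : 0 < η) (k : ℕ) (hk : 0 < k) :
    ∫ p in Set.Icc (-1 : ℝ) 1 ×ˢ Set.Icc (-1 : ℝ) 1,
      (PP η (2 * π * k * p.1) * PP η (2 * π * k * p.2) + 1) ≤ 13 := by
  have hc : Continuous fun p : ℝ × ℝ => PP η (2 * π * k * p.1) * PP η (2 * π * k * p.2) :=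
    ((PP_cont hη).comp (by fun_prop)).mul ((PP_cont hη).comp (by fun_prop))
  rw [integral_add (cont_intOn_sq hc) (cont_intOn_sq continuous_const)]
  have h1 : ∫ p in Set.Icc (-1 : ℝ) 1 ×ˢ Set.Icc (-1 : ℝ) 1,
      PP η (2 * π * k * p.1) * PP η (2 * π * k * p.2)
      = (∫ x in Set.Icc (-1 : ℝ) 1, PP η (2 * π * k * x)) *
        ∫ x in Set.Icc (-1 : ℝ) 1, PP η (2 * π * k * x) :=
    setIntegral_prod_mul (fun x => PP η (2 * π * k * x)) (fun x => PP η (2 * π * k * x)) _ _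
  have h2 : ∫ p in Set.Icc (-1 : ℝ) 1 ×ˢ Set.Icc (-1 : ℝ) 1, (1 : ℝ) = 4 := by
    have := setIntegral_prod_mul (μ := (volume : Measure ℝ)) (ν := (volume : Measure ℝ))
      (fun _ => (1 : ℝ)) (fun _ => (1 : ℝ)) (Set.Icc (-1 : ℝ) 1) (Set.Icc (-1 : ℝ) 1)
    rw [Icc_interval _ (by norm_num)] at this
    simp only [mul_one] at this
    refine this.trans ?_
    simp; norm_num
  rw [h1, h2]
  obtain ⟨a, b⟩ := PP_scaled hη k hk
  nlinarith

lemma Lap_WW_int {η : ℝ} (hη : 0 < η) (k : ℕ) (hk : 0 < k) :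
    ∫ p in uball, |Lap (WW η (2 * π * k)) p| ≤ 26 := by
  have hk' : (0 : ℝ) < k := by exact_mod_cast hk
  have hπ := pi_pos
  have hN : 0 < 2 * π * (k : ℝ) := by positivity
  have hc : Continuous fun p : ℝ × ℝ =>
      PP η (2 * π * k * p.1) * PP η (2 * π * k * p.2) + 1 :=
    (((PP_cont hη).comp (by fun_prop)).mul ((PP_cont hη).comp (by fun_prop))).add continuous_const
  have hL := (Lap_cont (WW_contDiff hη (2 * π * k))).abs
  calc ∫ p in uball, |Lap (WW η (2 * π * k)) p|
      ≤ ∫ p in Set.Icc (-1 : ℝ) 1 ×ˢ Set.Icc (-1 : ℝ) 1, |Lap (WW η (2 * π * k)) p| :=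
        setIntegral_mono_set (cont_intOn_sq hL) (ae_of_all _ fun p => abs_nonneg _)
          uball_sub.eventuallyLE
    _ ≤ ∫ p in Set.Icc (-1 : ℝ) 1 ×ˢ Set.Icc (-1 : ℝ) 1,
          2 * (PP η (2 * π * k * p.1) * PP η (2 * π * k * p.2) + 1) := by
        refine integral_mono (cont_intOn_sq hL) ((cont_intOn_sq hc).const_mul 2) fun p => ?_
        have := Lap_WW_bound hη hN p
        simp only
        linarith
    _ ≤ 26 := by
        rw [integral_const_mul]
        linarith [PPsq_int hη k hk]

lemma FF_lower {η x y : ℝ} (hη : 0 < η) (hx : η ≤ x) (hx1 : x ≤ 1) (hy : 0 ≤ y)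
    (hy1 : y ≤ x / 2) : 1 / (3200 * x ^ 2) ≤ FF η x y := by
  have hx0 : 0 < x := by linarith
  have h1 := one_sub_cos_ge (x := x) (by rw [abs_of_pos hx0]; linarith [pi_gt_three])
  have h2 := one_sub_sq_div_two_le_cos (x := x)
  have h3 := one_sub_sq_div_two_le_cos (x := y)
  have hy2 : y ^ 2 ≤ x ^ 2 / 4 := by nlinarith
  have hη2 : η ^ 2 ≤ x ^ 2 := by nlinarith
  have hD : 0 < η ^ 2 + (1 - cos x) + (1 - cos y) := by
    have : 0 < η ^ 2 := by positivity
    linarith [cos_le_one x, cos_le_one y]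
  have hD2 : η ^ 2 + (1 - cos x) + (1 - cos y) ≤ 2 * x ^ 2 := by nlinarith
  have hd : x ^ 2 / 20 ≤ cos y - cos x := by nlinarith
  unfold FF
  calc 1 / (3200 * x ^ 2) = (x ^ 2 / 20) ^ 2 / (2 * x ^ 2) ^ 3 := by field_simp; norm_num
    _ ≤ (cos y - cos x) ^ 2 / (η ^ 2 + (1 - cos x) + (1 - cos y)) ^ 3 := by gcongr
    _ = _ := by ring

def HH (η x : ℝ) : ℝ := ∫ y in (-π)..π, FF η x y

lemma HH_cont {η : ℝ} (hη : 0 < η) : Continuous (HH η) := by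
  unfold HH
  exact intervalIntegral.continuous_parametric_intervalIntegral_of_continuous' (FF_cont hη) _ _

lemma FF_cont_right {η : ℝ} (hη : 0 < η) (x : ℝ) : Continuous (FF η x) :=
  (FF_cont hη).comp (f := fun y : ℝ => ((x, y) : ℝ × ℝ)) (by fun_prop)

lemma HH_nonneg {η : ℝ} (hη : 0 < η) (x : ℝ) : 0 ≤ HH η x :=
  intervalIntegral.integral_nonneg (by linarith [pi_pos]) fun y _ => FF_nonneg hη x y

lemma HH_lower {η x : ℝ} (hη : 0 < η) (hx : η ≤ x) (hx1 : x ≤ 1) :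
    1 / 6400 * x⁻¹ ≤ HH η x := by
  have hx0 : 0 < x := by linarith
  have hπ := pi_gt_three
  have hc := FF_cont_right hη x
  calc 1 / 6400 * x⁻¹ = ∫ y in (0 : ℝ)..(x / 2), 1 / (3200 * x ^ 2) := by
        rw [intervalIntegral.integral_const, smul_eq_mul]; field_simp; ring
    _ ≤ ∫ y in (0 : ℝ)..(x / 2), FF η x y :=
        intervalIntegral.integral_mono_on (by linarith) (by simp) (hc.intervalIntegrable _ _)
          fun y hy => FF_lower hη hx hx1 hy.1 hy.2
    _ ≤ HH η x :=
        intervalIntegral.integral_mono_interval (by linarith) (by linarith) (by linarith)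
          (ae_of_all _ fun y => FF_nonneg hη x y) (hc.intervalIntegrable _ _)

lemma HH_int {η : ℝ} (hη : 0 < η) (hη1 : η ≤ 1) :
    1 / 6400 * log (1 / η) ≤ ∫ x in (-π)..π, HH η x := by
  have hπ := pi_gt_three
  have hc := HH_cont hη
  have h0 : (0 : ℝ) ∉ Set.uIcc η 1 := by
    rw [Set.uIcc_of_le hη1]; exact fun h => absurd h.1 (by linarith)
  calc 1 / 6400 * log (1 / η) = ∫ x in η..1, 1 / 6400 * x⁻¹ := by
        rw [intervalIntegral.integral_const_mul, integral_inv h0]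
    _ ≤ ∫ x in η..1, HH η x :=
        intervalIntegral.integral_mono_on hη1
          ((intervalIntegral.intervalIntegrable_inv (fun x hx => fun h => h0 (h ▸ hx))
            continuousOn_id).const_mul _)
          (hc.intervalIntegrable _ _) fun x hx => HH_lower hη hx.1 hx.2
    _ ≤ _ :=
        intervalIntegral.integral_mono_interval (by linarith) (by linarith) (by linarith)
          (ae_of_all _ fun y => HH_nonneg hη y) (hc.intervalIntegrable _ _)

lemma FF_int {η : ℝ} (hη : 0 < η) (hη1 : η ≤ 1) (k : ℕ) (hk : 0 < k) :
    1 / (2 * π) * (1 / (2 * π) * (1 / 6400 * log (1 / η))) ≤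
    ∫ p in Set.Icc (-(1 / 2) : ℝ) (1 / 2) ×ˢ Set.Icc (-(1 / 2) : ℝ) (1 / 2),
      FF η (2 * π * k * p.1) (2 * π * k * p.2) := by
  have hπ := pi_pos
  have hc : Continuous fun p : ℝ × ℝ => FF η (2 * π * k * p.1) (2 * π * k * p.2) :=
    (FF_cont hη).comp (f := fun p : ℝ × ℝ => (2 * π * k * p.1, 2 * π * k * p.2)) (by fun_prop)
  have hi : IntegrableOn (fun p : ℝ × ℝ => FF η (2 * π * k * p.1) (2 * π * k * p.2))
      (Set.Icc (-(1 / 2) : ℝ) (1 / 2) ×ˢ Set.Icc (-(1 / 2) : ℝ) (1 / 2))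
      ((volume : Measure ℝ).prod (volume : Measure ℝ)) :=
    hc.continuousOn.integrableOn_compact (isCompact_Icc.prod isCompact_Icc)
  have h1 := setIntegral_prod _ hi
  have hinner : ∀ x : ℝ, ∫ y in Set.Icc (-(1 / 2) : ℝ) (1 / 2), FF η x (2 * π * k * y)
      = 1 / (2 * π) * HH η x := by
    intro x
    have hper : Function.Periodic (FF η x) (2 * π) := fun y => by simp [FF]
    have h := periodic_scale (FF_cont_right hη x) hper k 1 hk
    rw [Nat.cast_one] at h
    rw [Icc_interval _ (by norm_num), h, HH]
  have houter : ∫ x in Set.Icc (-(1 / 2) : ℝ) (1 / 2), HH η (2 * π * k * x)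
      = 1 / (2 * π) * ∫ x in (-π)..π, HH η x := by
    have hper : Function.Periodic (HH η) (2 * π) := fun x => by simp [HH, FF]
    have h := periodic_scale (HH_cont hη) hper k 1 hk
    rw [Nat.cast_one] at h
    rw [Icc_interval _ (by norm_num), h]
  simp_rw [hinner] at h1
  rw [integral_const_mul, houter] at h1
  refine le_of_le_of_eq ?_ h1.symm
  have := HH_int hη hη1
  gcongr

lemma main_family (n : ℕ) : ∃ w : ℝ × ℝ → ℝ, ContDiff ℝ (⊤ : ℕ∞) w ∧ (∀ p, |w p| ≤ 1) ∧
    LipschitzWith 1 w ∧ ∫ p in uball, |Lap w p| ≤ 26 ∧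
    ∃ ψ, IsTest ψ ∧ tsupport ψ ⊆ uball ∧ (∀ p, |ψ p| ≤ 1) ∧
      (n : ℝ) ≤ ∫ p in uball, w p * pd1 (pd1 ψ) p := by
  have hπ := pi_pos
  set A : ℝ := 6400 * (2 * π) * (2 * π) * (n + 13) with hA
  have hA0 : 0 ≤ A := by positivity
  set η : ℝ := exp (-A) with hηd
  have hη : 0 < η := exp_pos _
  have hη1 : η ≤ 1 := exp_le_one_iff.mpr (by linarith)
  obtain ⟨k, hk⟩ := exists_nat_gt (6 + 2 / η ^ 2)
  have hkr : (0 : ℝ) < k := lt_trans (by positivity) hk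
  have hk0 : 0 < k := by exact_mod_cast hkr
  have hN : 6 + 2 / η ^ 2 ≤ 2 * π * k := by nlinarith [pi_gt_three]
  have hN0 : 0 < 2 * π * (k : ℝ) := by positivity
  have hWd := WW_contDiff hη (2 * π * k)
  refine ⟨WW η (2 * π * k), hWd, WW_bound hη hη1 hN, WW_lip hη hN, Lap_WW_int hη k hk0, ?_⟩
  let χ : ContDiffBump (0 : ℝ × ℝ) := ⟨1 / 2, 3 / 5, by norm_num, by norm_num⟩
  have hsub : Metric.closedBall (0 : ℝ × ℝ) (3 / 5) ⊆ uball := by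
    intro p hp
    rw [mem_closedBall_zero_iff] at hp
    have h1 := abs_le.mp ((norm_fst_le p).trans hp)
    have h2 := abs_le.mp ((norm_snd_le p).trans hp)
    change p.1 ^ 2 + p.2 ^ 2 < 1
    nlinarith
  have hts : tsupport (fun p => QQ η (2 * π * k) p * χ p) ⊆ tsupport χ :=
    tsupport_mul_subset_right
  have hcs : tsupport χ = Metric.closedBall (0 : ℝ × ℝ) (3 / 5) := χ.tsupport_eq
  have hψ : IsTest (fun p => QQ η (2 * π * k) p * χ p) :=
    ⟨(QQ_contDiff hη _).mul χ.contDiff, χ.hasCompactSupport.mul_left⟩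
  have hψs : tsupport (fun p => QQ η (2 * π * k) p * χ p) ⊆ uball :=
    hts.trans (hcs.le.trans hsub)
  refine ⟨_, hψ, hψs, fun p => ?_, ?_⟩
  · rw [abs_mul, abs_of_nonneg χ.nonneg]
    exact mul_le_one₀ (QQ_bound hη _ p) χ.nonneg χ.le_one
  rw [parts11 hWd hψ hψs]
  set Q := Set.Icc (-(1 / 2) : ℝ) (1 / 2) ×ˢ Set.Icc (-(1 / 2) : ℝ) (1 / 2) with hQ
  have hQm : MeasurableSet Q := measurableSet_Icc.prod measurableSet_Icc
  have hQn : ∀ p ∈ Q, p ∈ Metric.closedBall (0 : ℝ × ℝ) (1 / 2) := by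
    intro p hp
    rw [mem_closedBall_zero_iff]
    exact max_le (abs_le.mpr hp.1) (abs_le.mpr hp.2)
  have hQB : Q ⊆ uball := fun p hp =>
    hsub (Metric.closedBall_subset_closedBall (by norm_num) (hQn p hp))
  have hFc : Continuous fun p : ℝ × ℝ => FF η (2 * π * k * p.1) (2 * π * k * p.2) :=
    (FF_cont hη).comp (f := fun p : ℝ × ℝ => (2 * π * k * p.1, 2 * π * k * p.2)) (by fun_prop)
  have hPc : Continuous fun p : ℝ × ℝ =>
      PP η (2 * π * k * p.1) * PP η (2 * π * k * p.2) + 1 :=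
    (((PP_cont hη).comp (by fun_prop)).mul ((PP_cont hη).comp (by fun_prop))).add continuous_const
  have hPn : ∀ p : ℝ × ℝ, 0 ≤ PP η (2 * π * k * p.1) * PP η (2 * π * k * p.2) + 1 := fun p =>
    add_nonneg (mul_nonneg (PP_nonneg hη _) (PP_nonneg hη _)) zero_le_one
  have step1 : ∫ p in uball, (Q.indicator (fun p => FF η (2 * π * k * p.1) (2 * π * k * p.2)) p
        - (PP η (2 * π * k * p.1) * PP η (2 * π * k * p.2) + 1))
      ≤ ∫ p in uball, pd1 (pd1 (WW η (2 * π * k))) p * (QQ η (2 * π * k) p * χ p) := by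
    refine integral_mono (((cont_intOn hFc).indicator hQm).sub (cont_intOn hPc))
      (mul_test_integrable (pd1_contDiff (pd1_contDiff hWd)).continuous hψ).integrableOn fun p => ?_
    have hl := prod_lower hη hN0 p
    have hF := FF_nonneg hη (2 * π * k * p.1) (2 * π * k * p.2)
    have hP := hPn p
    have c0 : 0 ≤ χ p := χ.nonneg
    have c1 : χ p ≤ 1 := χ.le_one
    simp only
    rw [← mul_assoc]
    by_cases hp : p ∈ Q
    · rw [Set.indicator_of_mem hp, χ.one_of_mem_closedBall (hQn p hp), mul_one]
      exact hl
    · rw [Set.indicator_of_notMem hp]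
      nlinarith [mul_le_mul_of_nonneg_right hl c0, mul_nonneg hF c0,
        mul_nonneg hP (sub_nonneg.mpr c1)]
  rw [integral_sub ((cont_intOn hFc).indicator hQm) (cont_intOn hPc), setIntegral_indicator hQm,
    Set.inter_eq_self_of_subset_right hQB] at step1
  have step2 : ∫ p in uball, (PP η (2 * π * k * p.1) * PP η (2 * π * k * p.2) + 1) ≤ 13 :=
    (setIntegral_mono_set (cont_intOn_sq hPc) (ae_of_all _ hPn)
      uball_sub.eventuallyLE).trans (PPsq_int hη k hk0)
  have step3 := FF_int hη hη1 k hk0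
  have e : 1 / (2 * π) * (1 / (2 * π) * (1 / 6400 * log (1 / η))) = n + 13 := by
    rw [one_div η, log_inv, hηd, log_exp, neg_neg, hA]
    field_simp
  rw [e] at step3
  linarith

/-- There exists a Lipschitz function `f` on the unit ball `B = B(0,1) ⊆ ℝ²` whose
distributional Laplacian is represented by a function in `L¹(B)`, while its distributional
second derivative `∂_x² f` is not represented by any function in `L¹(B)`. -/
theorem lipschitz_L1_laplacian_not_L1_second_derivative :
    ∃ f : ℝ × ℝ → ℝ, (∃ K : NNReal, LipschitzOnWith K f uball) ∧
      (∃ g : ℝ × ℝ → ℝ, IntegrableOn g uball ∧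
        ∀ φ : ℝ × ℝ → ℝ, IsTest φ → tsupport φ ⊆ uball →
          ∫ p in uball, g p * φ p =
            ∫ p in uball, f p * (pd1 (pd1 φ) p + pd2 (pd2 φ) p)) ∧
      ¬ (∃ h : ℝ × ℝ → ℝ, IntegrableOn h uball ∧
        ∀ φ : ℝ × ℝ → ℝ, IsTest φ → tsupport φ ⊆ uball →
          ∫ p in uball, h p * φ p = ∫ p in uball, f p * pd1 (pd1 φ) p) := by
  choose w h1 h2 h3 h4 h5 using main_family
  exact abstract_thm w 26 h1 h2 h3 h4 h5
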